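/- Fix ω0 ∈ ℝ, σ0² > 0, σq² > 0, and suppose there is a single source quality, with signal density φ(s; ω, σq²). For r ∈ (0,∞), define D_r(ω) := ∫_{ω0−r}^{ω0+r} φ(t|ω; σq²) dt (the probability of the window under the signal density), the censored posterior mean a*(s,r) := (∫ ω·φ(s; ω, σq²)·φ(ω; ω0, σ0²)/D_r(ω) dω) / (∫ φ(s; ω, σq²)·φ(ω; ω0, σ0²)/D_r(ω) dω), and the expected quadratic loss L(r) := ∫ ( ∫_{ω0−r}^{ω0+r} (ω − a*(s,r))²·(φ(s; ω, σq²)/D_r(ω)) ds )·φ(ω; ω0, σ0²) dω. Then for every finite r > 0, L(r) ≥ σ0²·σq²/(σ0² + σq²), i.e., no finite censoring radius yields a strictly smaller expected loss than uncensored sampling, whose expected loss equals σ0²·σq²/(σ0² + σq²). -/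

import Mathlib

open MeasureTheory Real Filter

/-- The Gaussian density with mean `m` and variance `v`. -/
noncomputable def gauss (x m v : ℝ) : ℝ :=
  (Real.sqrt (2 * Real.pi * v))⁻¹ * Real.exp (-(x - m) ^ 2 / (2 * v))

/-- `D_r(ω)`: the probability of the window `[ω0−r, ω0+r]` under the signal density. -/
noncomputable def winProb (ω0 vq r ω : ℝ) : ℝ :=
  ∫ t in Set.Icc (ω0 - r) (ω0 + r), gauss t ω vq

/-- The censored posterior-mean action `a*(s,r)` with a single source quality. -/
noncomputable def aCens (ω0 v0 vq r s : ℝ) : ℝ :=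
  (∫ ω : ℝ, ω * (gauss s ω vq * gauss ω ω0 v0 / winProb ω0 vq r ω)) /
    (∫ ω : ℝ, gauss s ω vq * gauss ω ω0 v0 / winProb ω0 vq r ω)

/-- `L(r)`: the expected quadratic loss of censoring to radius `r` with a single quality. -/
noncomputable def lossCens (ω0 v0 vq r : ℝ) : ℝ :=
  ∫ ω : ℝ,
    (∫ s in Set.Icc (ω0 - r) (ω0 + r),
        (ω - aCens ω0 v0 vq r s) ^ 2 * (gauss s ω vq / winProb ω0 vq r ω)) *
      gauss ω ω0 v0

/-! Integrating the loss over the state first, it suffices to bound, for almost every signal in the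
window, the posterior variance from below by the uncensored one. A density `f` whose score
`ψ = (log f)'` decreases at rate at most `β` has variance at least `1 / β`: integrate
`((x - a) f)' = f + (x - a) ψ f` over the line, `a` being the mean. The posterior score is the
uncensored one minus `(log D_r)'`, and `D_r` is log-concave, so censoring cannot make the score
decrease faster than at the uncensored rate. -/

open Asymptotics

section LinearGrowth

lemma isBigO_one_add_abs_of_lipschitzWith {g : ℝ → ℝ} {K : NNReal} (hg : LipschitzWith K g) :
    g =O[⊤] fun x => 1 + |x| := by
  refine isBigO_top.2 ⟨|g 0| + K, fun x => ?_⟩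
  have hdist : |g x - g 0| ≤ K * |x| := by simpa [Real.dist_eq] using hg.dist_le_mul x 0
  have htri : |g x| ≤ |g 0| + |g x - g 0| := by simpa using abs_add_le (g 0) (g x - g 0)
  rw [norm_eq_abs, norm_of_nonneg (by positivity)]
  nlinarith [mul_nonneg (abs_nonneg (g 0)) (abs_nonneg x), K.coe_nonneg]

lemma isBigO_sub_const_one_add_abs (a : ℝ) : (fun x : ℝ => x - a) =O[⊤] fun x => 1 + |x| :=
  isBigO_one_add_abs_of_lipschitzWith (LipschitzWith.id.sub (LipschitzWith.const a))

lemma integrable_mul_mul_of_isBigO {μ : Measure ℝ} {f g h : ℝ → ℝ} (hf : Integrable f μ)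
    (hf2 : Integrable (fun x => x ^ 2 * f x) μ) (hgm : Measurable g) (hhm : Measurable h)
    (hg : g =O[⊤] fun x => 1 + |x|) (hh : h =O[⊤] fun x => 1 + |x|) :
    Integrable (fun x => g x * h x * f x) μ := by
  have hweight : (fun x : ℝ => (1 + |x|) * (1 + |x|)) =O[⊤] fun x => 1 + x ^ 2 :=
    isBigO_top.2 ⟨2, fun x => by
      rw [norm_of_nonneg (by positivity), norm_of_nonneg (by positivity), ← sq_abs x]
      nlinarith [sq_nonneg (|x| - 1)]⟩
  refine (((hg.mul hh).trans hweight).mul (isBigO_refl f ⊤)).integrable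
    ((hgm.mul hhm).aestronglyMeasurable.mul hf.aestronglyMeasurable) ?_
  simpa only [add_mul, one_mul] using Integrable.fun_add hf hf2

end LinearGrowth

section DensityMean

/-- The mean of the distribution on `ℝ` with (not necessarily normalised) density `f`. -/
noncomputable def densityMean (f : ℝ → ℝ) : ℝ :=
  (∫ x, x * f x) / ∫ x, f x

variable {f : ℝ → ℝ}

lemma integrable_sub_mul (hf : Integrable f) (hf2 : Integrable fun x => x ^ 2 * f x) (a : ℝ) :
    Integrable fun x => (x - a) * f x := by
  simpa only [mul_one] using integrable_mul_mul_of_isBigO hf hf2 (measurable_id'.sub_const a)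
    measurable_const (isBigO_sub_const_one_add_abs a)
    (isBigO_one_add_abs_of_lipschitzWith (LipschitzWith.const 1))

lemma integrable_sub_sq_mul (hf : Integrable f) (hf2 : Integrable fun x => x ^ 2 * f x) (a : ℝ) :
    Integrable fun x => (x - a) ^ 2 * f x := by
  simpa only [sq] using integrable_mul_mul_of_isBigO hf hf2 (measurable_id'.sub_const a)
    (measurable_id'.sub_const a) (isBigO_sub_const_one_add_abs a) (isBigO_sub_const_one_add_abs a)

lemma integral_sub_densityMean_mul (hf0 : 0 ≤ f) (hf : Integrable f)
    (hf2 : Integrable fun x => x ^ 2 * f x) : ∫ x, (x - densityMean f) * f x = 0 := by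
  have hf1 : Integrable fun x => x * f x := by simpa using integrable_sub_mul hf hf2 0
  simp only [sub_mul]
  rw [integral_sub hf1 (hf.const_mul _), integral_const_mul, sub_eq_zero]
  rcases eq_or_ne (∫ x, f x) 0 with hzero | hne
  · have hae : f =ᵐ[volume] 0 := (integral_eq_zero_iff_of_nonneg hf0 hf).1 hzero
    rw [hzero, mul_zero]
    exact integral_eq_zero_of_ae (hae.mono fun x hx => by simp [hx])
  · rw [densityMean, div_mul_cancel₀ _ hne]

lemma integral_sub_densityMean_sq_mul_le (hf0 : 0 ≤ f) (hf : Integrable f)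
    (hf2 : Integrable fun x => x ^ 2 * f x) (m : ℝ) :
    ∫ x, (x - densityMean f) ^ 2 * f x ≤ ∫ x, (x - m) ^ 2 * f x := by
  set a := densityMean f
  have hint1 := (integrable_sub_mul hf hf2 a).const_mul (2 * (a - m))
  have hint2 := integrable_sub_sq_mul hf hf2 a
  calc ∫ x, (x - a) ^ 2 * f x
      = ∫ x, ((x - a) ^ 2 * f x + 2 * (a - m) * ((x - a) * f x)) := by
        rw [integral_add hint2 hint1, integral_const_mul, integral_sub_densityMean_mul hf0 hf hf2,
          mul_zero, add_zero]
    _ ≤ ∫ x, (x - m) ^ 2 * f x :=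
        integral_mono (hint2.add hint1) (integrable_sub_sq_mul hf hf2 m) fun x => by
          linear_combination mul_nonneg (sq_nonneg (a - m)) (hf0 x)

lemma integral_le_mul_integral_sub_densityMean_sq {ψ : ℝ → ℝ} {β : ℝ} (hf0 : 0 ≤ f)
    (hf : Integrable f) (hf2 : Integrable fun x => x ^ 2 * f x)
    (hderiv : ∀ x, HasDerivAt f (ψ x * f x) x) (hmono : Monotone fun x => ψ x + β * x)
    (hgrowth : ψ =O[⊤] fun x => 1 + |x|) :
    ∫ x, f x ≤ β * ∫ x, (x - densityMean f) ^ 2 * f x := by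
  set a := densityMean f
  have hψ : Measurable ψ := by
    simpa only [add_sub_cancel_right] using hmono.measurable.fun_sub (measurable_id'.const_mul β)
  have hint1 := integrable_sub_mul hf hf2 a
  have hint2 := integrable_sub_sq_mul hf hf2 a
  have hintψ : Integrable fun x => (x - a) * ψ x * f x :=
    integrable_mul_mul_of_isBigO hf hf2 (measurable_id'.sub_const a) hψ
      (isBigO_sub_const_one_add_abs a) hgrowth
  have hparts : ∫ x, f x + (x - a) * ψ x * f x = 0 :=
    integral_eq_zero_of_hasDerivAt_of_integrable
      (fun x => (((hasDerivAt_id x).sub_const a).mul (hderiv x)).congr_deriv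
        (by simp only [id_eq]; ring))
      (hf.add hintψ) hint1
  have hscore (x : ℝ) : ψ a * (x - a) - β * (x - a) ^ 2 ≤ (x - a) * ψ x := by
    have hmul := monovary_iff_forall_mul_nonneg.1 (monotone_id.monovary hmono) a x
    rw [id_eq, id_eq] at hmul
    linarith
  have hlower : -(β * ∫ x, (x - a) ^ 2 * f x) ≤ ∫ x, (x - a) * ψ x * f x :=
    calc -(β * ∫ x, (x - a) ^ 2 * f x)
        = ∫ x, (ψ a * ((x - a) * f x) - β * ((x - a) ^ 2 * f x)) := by
          rw [integral_sub (hint1.const_mul _) (hint2.const_mul _), integral_const_mul,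
            integral_const_mul, integral_sub_densityMean_mul hf0 hf hf2, mul_zero, zero_sub]
      _ ≤ ∫ x, (x - a) * ψ x * f x :=
          integral_mono ((hint1.const_mul _).sub (hint2.const_mul _)) hintψ fun x => by
            linear_combination mul_le_mul_of_nonneg_right (hscore x) (hf0 x)
  rw [integral_add hf hintψ] at hparts
  linarith

end DensityMean

section GaussianDensity

lemma gauss_pos (x m : ℝ) {v : ℝ} (hv : 0 < v) : 0 < gauss x m v := by
  unfold gauss
  positivity

lemma gauss_nonneg (x m v : ℝ) : 0 ≤ gauss x m v := by
  unfold gauss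
  positivity

lemma gauss_comm (x m v : ℝ) : gauss x m v = gauss m x v := by
  rw [gauss, gauss, ← neg_sub m x, neg_sq]

lemma gauss_sub_zero (x m v : ℝ) : gauss (x - m) 0 v = gauss x m v := by
  simp only [gauss, sub_zero]

@[fun_prop]
lemma continuous_gauss {X : Type*} [TopologicalSpace X] {x m : X → ℝ} (hx : Continuous x)
    (hm : Continuous m) (v : ℝ) : Continuous fun z => gauss (x z) (m z) v := by
  unfold gauss
  fun_prop

lemma hasDerivAt_gauss (x m v : ℝ) :
    HasDerivAt (gauss · m v) (-((x - m) / v) * gauss x m v) x := by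
  have hexponent : HasDerivAt (fun t => -(t - m) ^ 2 / (2 * v)) (-((x - m) / v)) x :=
    (((((hasDerivAt_id x).sub_const m).pow 2).neg).div_const (2 * v)).congr_deriv (by
      simp only [id_eq, Nat.cast_ofNat, Nat.add_one_sub_one, pow_one, mul_one]
      ring)
  exact (hexponent.exp.const_mul _).congr_deriv (by rw [gauss]; ring)

lemma hasDerivAt_gauss_mean (x m v : ℝ) :
    HasDerivAt (gauss x · v) ((x - m) / v * gauss x m v) m := by
  simp only [gauss_comm x]
  exact (hasDerivAt_gauss m x v).congr_deriv (by ring)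

lemma gauss_eq_gaussianPDFReal (x m : ℝ) (v : NNReal) :
    gauss x m v = ProbabilityTheory.gaussianPDFReal m v x :=
  rfl

lemma integral_gauss (m : ℝ) {v : ℝ} (hv : 0 < v) : ∫ x, gauss x m v = 1 := by
  lift v to NNReal using hv.le
  simpa only [gauss_eq_gaussianPDFReal] using
    ProbabilityTheory.integral_gaussianPDFReal_eq_one m (NNReal.coe_ne_zero.1 hv.ne')

lemma integrable_sq_mul_gauss (m : ℝ) {v : ℝ} (hv : 0 < v) :
    Integrable fun x => x ^ 2 * gauss x m v := by
  lift v to NNReal using hv.le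
  have hsq := (ProbabilityTheory.memLp_id_gaussianReal (μ := m) (v := v) 2).integrable_sq
  rw [ProbabilityTheory.gaussianReal_of_var_ne_zero m (NNReal.coe_ne_zero.1 hv.ne'),
    integrable_withDensity_iff (ProbabilityTheory.measurable_gaussianPDF _ _)
      (Eventually.of_forall fun _ => ProbabilityTheory.gaussianPDF_lt_top)] at hsq
  simpa only [ProbabilityTheory.toReal_gaussianPDF, id_eq, gauss_eq_gaussianPDFReal] using hsq

lemma monotone_gaussScore_add (m v : ℝ) : Monotone fun x => -((x - m) / v) + v⁻¹ * x :=
  fun x y _ => le_of_eq (by ring)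

lemma isBigO_gaussScore (m v : ℝ) : (fun x => -((x - m) / v)) =O[⊤] fun x : ℝ => 1 + |x| := by
  simpa only [div_eq_inv_mul] using
    ((isBigO_sub_const_one_add_abs m).const_mul_left v⁻¹).neg_left

end GaussianDensity

section WindowProbability

variable {c v r : ℝ}

lemma winProb_eq_intervalIntegral (hr : 0 ≤ r) (ω : ℝ) :
    winProb c v r ω = ∫ t in (c - r)..(c + r), gauss t ω v := by
  rw [winProb, integral_Icc_eq_integral_Ioc, intervalIntegral.integral_of_le (by linarith)]

lemma winProb_nonneg (ω : ℝ) : 0 ≤ winProb c v r ω :=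
  integral_nonneg fun t => gauss_nonneg t ω v

lemma winProb_pos (hr : 0 < r) (hv : 0 < v) (ω : ℝ) : 0 < winProb c v r ω := by
  rw [winProb_eq_intervalIntegral hr.le]
  exact intervalIntegral.intervalIntegral_pos_of_pos
    (Continuous.intervalIntegrable (by fun_prop) _ _) (fun t => gauss_pos t ω hv) (by linarith)

lemma hasDerivAt_winProb (hr : 0 ≤ r) (ω : ℝ) :
    HasDerivAt (winProb c v r) (gauss (c - r) ω v - gauss (c + r) ω v) ω := by
  have hcont : Continuous (gauss · 0 v) := by fun_prop
  have hshift : winProb c v r =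
      fun ω => (∫ y in 0..(c + r - ω), gauss y 0 v) - ∫ y in 0..(c - r - ω), gauss y 0 v := by
    ext ω
    rw [intervalIntegral.integral_interval_sub_left (hcont.intervalIntegrable _ _)
      (hcont.intervalIntegrable _ _), winProb_eq_intervalIntegral hr,
      ← intervalIntegral.integral_comp_sub_right (gauss · 0 v)]
    simp only [gauss_sub_zero]
  have hend (e : ℝ) :
      HasDerivAt (fun ω => ∫ y in 0..(e - ω), gauss y 0 v) (-gauss e ω v) ω :=
    ((hcont.integral_hasStrictDerivAt 0 (e - ω)).hasDerivAt.comp ω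
      ((hasDerivAt_id ω).const_sub e)).congr_deriv (by rw [gauss_sub_zero, mul_neg_one])
  rw [hshift]
  exact ((hend _).sub (hend _)).congr_deriv (by ring)

lemma continuous_winProb (hr : 0 ≤ r) : Continuous (winProb c v r) :=
  continuous_iff_continuousAt.2 fun ω => (hasDerivAt_winProb hr ω).continuousAt

lemma integral_sub_mul_gauss (hv : v ≠ 0) (a b ω : ℝ) :
    ∫ t in a..b, (t - ω) * gauss t ω v = v * (gauss a ω v - gauss b ω v) := by
  have hderiv (t : ℝ) : HasDerivAt (fun t => -v * gauss t ω v) ((t - ω) * gauss t ω v) t :=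
    ((hasDerivAt_gauss t ω v).const_mul (-v)).congr_deriv (by field_simp)
  rw [intervalIntegral.integral_eq_sub_of_hasDerivAt (fun t _ => hderiv t)
    (Continuous.intervalIntegrable (by fun_prop) _ _)]
  ring

lemma mul_winProb_le_mul_sub (hr : 0 ≤ r) (hv : v ≠ 0) (ω : ℝ) :
    (c - r - ω) * winProb c v r ω ≤ v * (gauss (c - r) ω v - gauss (c + r) ω v) := by
  rw [← integral_sub_mul_gauss hv, winProb_eq_intervalIntegral hr,
    ← intervalIntegral.integral_const_mul]
  refine intervalIntegral.integral_mono_on (by linarith)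
    (Continuous.intervalIntegrable (by fun_prop) _ _)
    (Continuous.intervalIntegrable (by fun_prop) _ _) fun t ht => ?_
  exact mul_le_mul_of_nonneg_right (by linarith [ht.1]) (gauss_nonneg _ _ _)

lemma mul_sub_le_mul_winProb (hr : 0 ≤ r) (hv : v ≠ 0) (ω : ℝ) :
    v * (gauss (c - r) ω v - gauss (c + r) ω v) ≤ (c + r - ω) * winProb c v r ω := by
  rw [← integral_sub_mul_gauss hv, winProb_eq_intervalIntegral hr,
    ← intervalIntegral.integral_const_mul]
  refine intervalIntegral.integral_mono_on (by linarith)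
    (Continuous.intervalIntegrable (by fun_prop) _ _)
    (Continuous.intervalIntegrable (by fun_prop) _ _) fun t ht => ?_
  exact mul_le_mul_of_nonneg_right (by linarith [ht.2]) (gauss_nonneg _ _ _)

lemma logDeriv_winProb (hr : 0 ≤ r) (ω : ℝ) : logDeriv (winProb c v r) ω =
    (gauss (c - r) ω v - gauss (c + r) ω v) / winProb c v r ω := by
  rw [logDeriv_apply, (hasDerivAt_winProb hr ω).deriv]

lemma abs_logDeriv_winProb_le (hr : 0 < r) (hv : 0 < v) (ω : ℝ) :
    |logDeriv (winProb c v r) ω| ≤ (|c - ω| + r) / v := by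
  have hlower := mul_winProb_le_mul_sub (c := c) hr.le hv.ne' ω
  have hupper := mul_sub_le_mul_winProb (c := c) hr.le hv.ne' ω
  have hD := winProb_pos (c := c) hr hv ω
  rw [logDeriv_winProb hr.le, abs_div, abs_of_pos hD, div_le_div_iff₀ hD hv, ← abs_of_pos hv,
    ← abs_mul, abs_of_pos hv, abs_le]
  constructor <;> nlinarith [le_abs_self (c - ω), neg_abs_le (c - ω)]

/- With `l`, `u` the ends of the window, log-concavity `D D'' ≤ D' ^ 2` follows from
`v D'' = (l - ω) φ(l) - (u - ω) φ(u)` and `(l - ω) D ≤ v D' ≤ (u - ω) D`. -/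
lemma antitone_logDeriv_winProb (hr : 0 < r) (hv : 0 < v) :
    Antitone (logDeriv (winProb c v r)) := by
  rw [funext (logDeriv_winProb hr.le)]
  have hderiv (ω : ℝ) :=
    ((hasDerivAt_gauss_mean (c - r) ω v).sub (hasDerivAt_gauss_mean (c + r) ω v)).div
      (hasDerivAt_winProb (c := c) hr.le ω) (winProb_pos hr hv ω).ne'
  refine antitone_of_hasDerivAt_nonpos hderiv fun ω => div_nonpos_of_nonpos_of_nonneg ?_
    (sq_nonneg _)
  have hlower := mul_le_mul_of_nonneg_left (mul_winProb_le_mul_sub (c := c) hr.le hv.ne' ω)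
    (gauss_nonneg (c - r) ω v)
  have hupper := mul_le_mul_of_nonneg_left (mul_sub_le_mul_winProb (c := c) hr.le hv.ne' ω)
    (gauss_nonneg (c + r) ω v)
  rw [sub_nonpos, Pi.sub_apply]
  generalize gauss (c - r) ω v = φl, gauss (c + r) ω v = φu, winProb c v r ω = D at *
  calc ((c - r - ω) / v * φl - (c + r - ω) / v * φu) * D
      = (φl * ((c - r - ω) * D) - φu * ((c + r - ω) * D)) / v := by ring
    _ ≤ (φl * (v * (φl - φu)) - φu * (v * (φl - φu))) / v := by gcongr
    _ = (φl - φu) * (φl - φu) := by field_simp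

lemma isBigO_logDeriv_winProb (hr : 0 < r) (hv : 0 < v) :
    logDeriv (winProb c v r) =O[⊤] fun ω => 1 + |ω| := by
  refine isBigO_top.2 ⟨(|c| + r + 1) / v, fun ω => ?_⟩
  rw [norm_eq_abs, norm_of_nonneg (by positivity), div_mul_eq_mul_div]
  refine (abs_logDeriv_winProb_le hr hv ω).trans ?_
  gcongr
  nlinarith [abs_sub c ω, mul_nonneg (add_nonneg (abs_nonneg c) hr.le) (abs_nonneg ω)]

end WindowProbability

section TotalVariance

variable {S : Type*} [MeasurableSpace S] {ν : Measure S} [SFinite ν] {f : S → ℝ → ℝ}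

lemma integrable_prod_mul_of_integral_eq_one {X : Type*} [MeasurableSpace X] {μ : Measure X}
    {q : X → ℝ} {k : X → S → ℝ} (hq : Integrable q μ) (hk : Measurable (Function.uncurry k))
    (hk0 : ∀ x s, 0 ≤ k x s) (hk1 : ∀ x, ∫ s, k x s ∂ν = 1) :
    Integrable (fun z : X × S => q z.1 * k z.1 z.2) (μ.prod ν) := by
  have hmeas : AEStronglyMeasurable (fun z : X × S => q z.1 * k z.1 z.2) (μ.prod ν) :=
    hq.aestronglyMeasurable.comp_fst.mul hk.aestronglyMeasurable
  refine (integrable_prod_iff hmeas).2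
    ⟨Eventually.of_forall fun x => (integrable_of_integral_eq_one (hk1 x)).const_mul (q x), ?_⟩
  simpa only [norm_mul, norm_of_nonneg (hk0 _ _), integral_const_mul, hk1, mul_one] using hq.norm

lemma aestronglyMeasurable_densityMean
    (hf : Integrable (fun z : ℝ × S => f z.2 z.1) (volume.prod ν)) :
    AEStronglyMeasurable (fun s => densityMean (f s)) ν := by
  have hf1 : AEStronglyMeasurable (fun z : ℝ × S => z.1 * f z.2 z.1) (volume.prod ν) :=
    measurable_fst.aestronglyMeasurable.mul hf.aestronglyMeasurable
  exact (hf1.prod_swap.integral_prod_right'.aemeasurable.div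
    hf.integral_prod_right.aestronglyMeasurable.aemeasurable).aestronglyMeasurable

lemma integrable_sub_densityMean_sq_mul (hf0 : ∀ s, 0 ≤ f s)
    (hf : Integrable (fun z : ℝ × S => f z.2 z.1) (volume.prod ν))
    (hf2 : Integrable (fun z : ℝ × S => z.1 ^ 2 * f z.2 z.1) (volume.prod ν)) :
    Integrable (fun z : ℝ × S => (z.1 - densityMean (f z.2)) ^ 2 * f z.2 z.1)
      (volume.prod ν) := by
  have hmeas : AEStronglyMeasurable
      (fun z : ℝ × S => (z.1 - densityMean (f z.2)) ^ 2 * f z.2 z.1) (volume.prod ν) :=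
    ((measurable_fst.aestronglyMeasurable.sub
      (aestronglyMeasurable_densityMean hf).comp_snd).pow 2).mul hf.aestronglyMeasurable
  refine (integrable_prod_iff' hmeas).2 ⟨?_, ?_⟩
  · filter_upwards [hf.prod_left_ae, hf2.prod_left_ae] with s hs hs2
    exact integrable_sub_sq_mul hs hs2 _
  · refine hf2.integral_prod_right.mono' hmeas.norm.prod_swap.integral_prod_right' ?_
    filter_upwards [hf.prod_left_ae, hf2.prod_left_ae] with s hs hs2
    have hnonneg (x : ℝ) : 0 ≤ (x - densityMean (f s)) ^ 2 * f s x :=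
      mul_nonneg (sq_nonneg _) (hf0 s x)
    simp only [norm_of_nonneg (hnonneg _), norm_of_nonneg (integral_nonneg hnonneg)]
    simpa only [sub_zero] using integral_sub_densityMean_sq_mul_le (hf0 s) hs hs2 0

lemma integral_integral_le_mul_integral_integral_sub_densityMean_sq {β : ℝ} (hf0 : ∀ s, 0 ≤ f s)
    (hf : Integrable (fun z : ℝ × S => f z.2 z.1) (volume.prod ν))
    (hf2 : Integrable (fun z : ℝ × S => z.1 ^ 2 * f z.2 z.1) (volume.prod ν))
    (hβ : ∀ᵐ s ∂ν, ∫ x, f s x ≤ β * ∫ x, (x - densityMean (f s)) ^ 2 * f s x) :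
    ∫ x, ∫ s, f s x ∂ν ≤ β * ∫ x, ∫ s, (x - densityMean (f s)) ^ 2 * f s x ∂ν := by
  have hsq := integrable_sub_densityMean_sq_mul hf0 hf hf2
  rw [integral_integral_swap (f := fun x s => f s x) hf,
    integral_integral_swap (f := fun x s => (x - densityMean (f s)) ^ 2 * f s x) hsq,
    ← integral_const_mul]
  exact integral_mono_ae hf.integral_prod_right (hsq.integral_prod_right.const_mul β) hβ

end TotalVariance

section CensoredPosterior

/-- The joint density of signal `s` and state `ω`, for a prior density `p` and signals of variance
`v` censored to the radius `r` around `c`: an arbitrary window center and prior replace `ω0` and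
the Gaussian prior of `aCens` and `lossCens`. -/
noncomputable def censoredJoint (p : ℝ → ℝ) (c v r s ω : ℝ) : ℝ :=
  gauss s ω v * p ω / winProb c v r ω

/-- The expected quadratic loss of the posterior-mean action, for a prior density `p` and signals
of variance `v` censored to the radius `r` around `c`. -/
noncomputable def censoredLoss (p : ℝ → ℝ) (c v r : ℝ) : ℝ :=
  ∫ ω, (∫ s in Set.Icc (c - r) (c + r),
    (ω - densityMean (censoredJoint p c v r s)) ^ 2 * (gauss s ω v / winProb c v r ω)) * p ω

variable {p ψ : ℝ → ℝ} {c v r K : ℝ}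

lemma censoredJoint_nonneg (hp : 0 ≤ p) (s : ℝ) : 0 ≤ censoredJoint p c v r s := fun ω =>
  div_nonneg (mul_nonneg (gauss_nonneg _ _ _) (hp ω)) (winProb_nonneg ω)

lemma lossCens_eq_censoredLoss (ω0 v0 vq r : ℝ) :
    lossCens ω0 v0 vq r = censoredLoss (gauss · ω0 v0) ω0 vq r :=
  rfl

lemma setIntegral_gauss_div_winProb (hr : 0 < r) (hv : 0 < v) (ω : ℝ) :
    ∫ s in Set.Icc (c - r) (c + r), gauss s ω v / winProb c v r ω = 1 := by
  rw [integral_div]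
  exact div_self (winProb_pos hr hv ω).ne'

lemma integrable_mul_censoredJoint {g : ℝ → ℝ} (hg : Integrable fun ω => g ω * p ω) (hr : 0 < r)
    (hv : 0 < v) : Integrable (fun z : ℝ × ℝ => g z.1 * censoredJoint p c v r z.2 z.1)
      (volume.prod (volume.restrict (Set.Icc (c - r) (c + r)))) := by
  have hk : Measurable
      (Function.uncurry fun ω s : ℝ => gauss s ω v / winProb c v r ω) :=
    ((continuous_gauss continuous_snd continuous_fst v).measurable).div
      ((continuous_winProb hr.le).measurable.comp measurable_fst)
  refine (integrable_prod_mul_of_integral_eq_one hg hk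
    (fun ω _ => div_nonneg (gauss_nonneg _ _ _) (winProb_nonneg ω))
    (setIntegral_gauss_div_winProb hr hv)).congr (Eventually.of_forall fun z => ?_)
  simp only [censoredJoint]
  ring

lemma integral_integral_censoredJoint (hr : 0 < r) (hv : 0 < v) :
    ∫ ω, ∫ s in Set.Icc (c - r) (c + r), censoredJoint p c v r s ω = ∫ ω, p ω := by
  simp only [censoredJoint, mul_div_right_comm, integral_mul_const,
    setIntegral_gauss_div_winProb hr hv, one_mul]

lemma censoredLoss_eq_integral_integral :
    censoredLoss p c v r = ∫ ω, ∫ s in Set.Icc (c - r) (c + r),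
      (ω - densityMean (censoredJoint p c v r s)) ^ 2 * censoredJoint p c v r s ω := by
  simp only [censoredLoss, ← integral_mul_const, censoredJoint, mul_assoc, mul_div_right_comm]

lemma censoredLoss_nonneg (hp : 0 ≤ p) : 0 ≤ censoredLoss p c v r :=
  integral_nonneg fun ω => mul_nonneg (integral_nonneg fun _ =>
    mul_nonneg (sq_nonneg _) (div_nonneg (gauss_nonneg _ _ _) (winProb_nonneg ω))) (hp ω)

lemma hasDerivAt_censoredJoint (hr : 0 < r) (hv : 0 < v)
    (hp : ∀ ω, HasDerivAt p (ψ ω * p ω) ω) (s ω : ℝ) :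
    HasDerivAt (censoredJoint p c v r s)
      ((ψ ω + ((s - ω) / v - logDeriv (winProb c v r) ω)) * censoredJoint p c v r s ω) ω := by
  have hD := (winProb_pos (c := c) hr hv ω).ne'
  refine (((hasDerivAt_gauss_mean s ω v).mul (hp ω)).div (hasDerivAt_winProb hr.le ω)
    hD).congr_deriv ?_
  rw [logDeriv_winProb hr.le, censoredJoint, Pi.mul_apply]
  field_simp
  ring

lemma monotone_censoredScore_add (hr : 0 < r) (hv : 0 < v)
    (hψ : Monotone fun ω => ψ ω + K * ω) (s : ℝ) :
    Monotone fun ω =>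
      ψ ω + ((s - ω) / v - logDeriv (winProb c v r) ω) + (K + v⁻¹) * ω := by
  intro ω ω' hω
  have hprior := hψ hω
  have hwindow := antitone_logDeriv_winProb (c := c) hr hv hω
  simp only [div_eq_mul_inv] at hprior ⊢
  linarith

lemma isBigO_censoredScore (hr : 0 < r) (hv : 0 < v) (hψ : ψ =O[⊤] fun ω => 1 + |ω|) (s : ℝ) :
    (fun ω => ψ ω + ((s - ω) / v - logDeriv (winProb c v r) ω)) =O[⊤] fun ω => 1 + |ω| := by
  have hlik : (fun ω => (s - ω) / v) =O[⊤] fun ω : ℝ => 1 + |ω| := by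
    simpa only [← neg_div, neg_sub] using isBigO_gaussScore s v
  exact hψ.add (hlik.sub (isBigO_logDeriv_winProb hr hv))

end CensoredPosterior

/-- `hmono` says that `(log p)'' ≥ -K`, as for a finite mixture of Gaussians of variance `K⁻¹`. -/
theorem stmt_6_general {p ψ : ℝ → ℝ} {c v r K : ℝ} (hp0 : 0 ≤ p) (hp1 : ∫ ω, p ω = 1)
    (hp2 : Integrable fun ω => ω ^ 2 * p ω) (hderiv : ∀ ω, HasDerivAt p (ψ ω * p ω) ω)
    (hmono : Monotone fun ω => ψ ω + K * ω) (hgrowth : ψ =O[⊤] fun ω => 1 + |ω|)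
    (hv : 0 < v) (hr : 0 < r) : (K + v⁻¹)⁻¹ ≤ censoredLoss p c v r := by
  have hmass : Integrable (fun z : ℝ × ℝ => censoredJoint p c v r z.2 z.1)
      (volume.prod (volume.restrict (Set.Icc (c - r) (c + r)))) := by
    simpa only [one_mul] using integrable_mul_censoredJoint (g := fun _ => 1)
      (by simpa only [one_mul] using integrable_of_integral_eq_one hp1) hr hv
  have hsq := integrable_mul_censoredJoint (c := c) hp2 hr hv
  have hloss : 1 ≤ (K + v⁻¹) * censoredLoss p c v r := by
    rw [← hp1, ← integral_integral_censoredJoint (c := c) hr hv, censoredLoss_eq_integral_integral]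
    refine integral_integral_le_mul_integral_integral_sub_densityMean_sq
      (censoredJoint_nonneg hp0) hmass hsq ?_
    filter_upwards [hmass.prod_left_ae, hsq.prod_left_ae] with s hs hs2
    exact integral_le_mul_integral_sub_densityMean_sq (censoredJoint_nonneg hp0 s) hs hs2
      (hasDerivAt_censoredJoint hr hv hderiv s) (monotone_censoredScore_add hr hv hmono s)
      (isBigO_censoredScore hr hv hgrowth s)
  have hprecision : 0 < K + v⁻¹ :=
    pos_of_mul_pos_left (one_pos.trans_le hloss) (censoredLoss_nonneg hp0)
  exact (inv_le_iff_one_le_mul₀' hprecision).2 hloss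

/-- Proposition 5 (`prop:actionlin`, single-quality case): with a single source quality, no
finite censoring radius does strictly better than uncensored sampling, whose expected loss
is the posterior variance `σ0²σq²/(σ0²+σq²)`. -/
theorem stmt_6 (ω0 v0 vq : ℝ) (hv0 : 0 < v0) (hvq : 0 < vq) :
    ∀ r : ℝ, 0 < r → v0 * vq / (v0 + vq) ≤ lossCens ω0 v0 vq r := by
  intro r hr
  have hvar : v0 * vq / (v0 + vq) = (v0⁻¹ + vq⁻¹)⁻¹ := by
    field_simp
    ring
  rw [hvar, lossCens_eq_censoredLoss]
  exact stmt_6_general (fun ω => gauss_nonneg ω ω0 v0) (integral_gauss ω0 hv0)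
    (integrable_sq_mul_gauss ω0 hv0) (fun ω => hasDerivAt_gauss ω ω0 v0)
    (monotone_gaussScore_add ω0 v0) (isBigO_gaussScore ω0 v0) hvq hr
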